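/- For every positive integer n, the number of n×n partial Latin rectangles based on n symbols of size 6 satisfies 720·|R_{n,n,n:6}| = n³·(n−1)²·(n−2)²·(n¹¹ + 6n¹⁰ − 22n⁹ − 168n⁸ + 231n⁷ + 2022n⁶ − 2014n⁵ − 12606n⁴ + 16168n³ + 32250n² − 70740n + 36600). -/

import Mathlib

open Finset

/-- `E` is (the entry set of) an `r × s` partial Latin rectangle based on `n` symbols:
no two distinct triples agree in both their first and second coordinates, in both their
first and third coordinates, or in both their second and third coordinates. -/
def IsPLR {r s n : ℕ} (E : Finset (Fin r × Fin s × Fin n)) : Prop :=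
  ∀ e ∈ E, ∀ e' ∈ E, e ≠ e' →
    ¬(e.1 = e'.1 ∧ e.2.1 = e'.2.1) ∧
    ¬(e.1 = e'.1 ∧ e.2.2 = e'.2.2) ∧
    ¬(e.2.1 = e'.2.1 ∧ e.2.2 = e'.2.2)

/-- The number of entries of `E` in row `i`. -/
def rowType {r s n : ℕ} (E : Finset (Fin r × Fin s × Fin n)) (i : Fin r) : ℕ :=
  (E.filter (fun e => e.1 = i)).card

/-- The number of entries of `E` in column `j`. -/
def colType {r s n : ℕ} (E : Finset (Fin r × Fin s × Fin n)) (j : Fin s) : ℕ :=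
  (E.filter (fun e => e.2.1 = j)).card

/-- The number of occurrences of symbol `k` in `E`. -/
def symType {r s n : ℕ} (E : Finset (Fin r × Fin s × Fin n)) (k : Fin n) : ℕ :=
  (E.filter (fun e => e.2.2 = k)).card

/-- The number of `r × s` partial Latin rectangles based on `n` symbols of size `m`. -/
noncomputable def numPLR (r s n m : ℕ) : ℕ :=
  Nat.card {E : Finset (Fin r × Fin s × Fin n) // IsPLR E ∧ E.card = m}

/-! Masks of the set partitions of `Fin 6` with a given number of blocks. -/
def M1 : List ℕ := [nat_lit 549687102]
def M2 : List ℕ := [nat_lit 4294430, nat_lit 8555310, nat_lit 536904462, nat_lit 537070902,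
  nat_lit 8455446, nat_lit 4327718, nat_lit 549454086, nat_lit 549457466, nat_lit 4326938,
  nat_lit 8456746, nat_lit 537068042, nat_lit 536906802, nat_lit 8553490, nat_lit 4294690,
  nat_lit 549683202, nat_lit 549683260, nat_lit 4294684, nat_lit 8553516, nat_lit 536906764,
  nat_lit 537068084, nat_lit 8456724, nat_lit 4326948, nat_lit 549457412, nat_lit 549454136,
  nat_lit 4327704, nat_lit 8455464, nat_lit 537070856, nat_lit 536904496, nat_lit 8555280,
  nat_lit 4294432, nat_lit 549687040]
def M3 : List ℕ := [nat_lit 33550, nat_lit 66838, nat_lit 4194566, nat_lit 133414,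
  nat_lit 8388870, nat_lit 536871174, nat_lit 4195866, nat_lit 66058, nat_lit 8391210,
  nat_lit 131594, nat_lit 536871434, nat_lit 33810, nat_lit 4292610, nat_lit 34850,
  nat_lit 8552450, nat_lit 536903682, nat_lit 536874034, nat_lit 132114, nat_lit 8389650,
  nat_lit 67618, nat_lit 537067522, nat_lit 8454146, nat_lit 4196386, nat_lit 4325378,
  nat_lit 549453826, nat_lit 4292636, nat_lit 33804, nat_lit 8552492, nat_lit 34828,
  nat_lit 536903692, nat_lit 66068, nat_lit 4195844, nat_lit 131620, nat_lit 8391172,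
  nat_lit 536871428, nat_lit 537067572, nat_lit 67604, nat_lit 8454164, nat_lit 132132,
  nat_lit 536873988, nat_lit 8389636, nat_lit 4325412, nat_lit 4196356, nat_lit 549453828,
  nat_lit 4194584, nat_lit 66824, nat_lit 8388904, nat_lit 133384, nat_lit 536871176,
  nat_lit 33552, nat_lit 4294400, nat_lit 33568, nat_lit 8555264, nat_lit 536904448,
  nat_lit 536871216, nat_lit 133392, nat_lit 8388880, nat_lit 66848, nat_lit 537070848,
  nat_lit 8455424, nat_lit 4194592, nat_lit 4327680, nat_lit 549454080, nat_lit 549453880,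
  nat_lit 4196376, nat_lit 4325400, nat_lit 8389672, nat_lit 536873992, nat_lit 132104,
  nat_lit 8454184, nat_lit 67592, nat_lit 537067528, nat_lit 536871472, nat_lit 8391184,
  nat_lit 131600, nat_lit 4195872, nat_lit 549457408, nat_lit 4326912, nat_lit 66080,
  nat_lit 8456704, nat_lit 537068032, nat_lit 536903728, nat_lit 34832, nat_lit 8552464,
  nat_lit 33824, nat_lit 536906752, nat_lit 8553472, nat_lit 4292640, nat_lit 4294656,
  nat_lit 549683200]
def M4 : List ℕ := [nat_lit 262, nat_lit 522, nat_lit 32770, nat_lit 1042, nat_lit 65538,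
  nat_lit 4194306, nat_lit 2082, nat_lit 131074, nat_lit 8388610, nat_lit 536870914,
  nat_lit 32780, nat_lit 516, nat_lit 65556, nat_lit 1028, nat_lit 4194308, nat_lit 131108,
  nat_lit 2052, nat_lit 8388612, nat_lit 536870916, nat_lit 264, nat_lit 33536, nat_lit 272,
  nat_lit 66816, nat_lit 4194560, nat_lit 288, nat_lit 133376, nat_lit 8388864,
  nat_lit 536871168, nat_lit 4194328, nat_lit 1032, nat_lit 65544, nat_lit 8388648,
  nat_lit 2056, nat_lit 131080, nat_lit 536870920, nat_lit 528, nat_lit 4195840, nat_lit 66048,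
  nat_lit 544, nat_lit 8391168, nat_lit 131584, nat_lit 536871424, nat_lit 32784,
  nat_lit 33792, nat_lit 4292608, nat_lit 32800, nat_lit 34816, nat_lit 8552448,
  nat_lit 536903680, nat_lit 536870960, nat_lit 2064, nat_lit 131088, nat_lit 8388624,
  nat_lit 1056, nat_lit 536873984, nat_lit 132096, nat_lit 8389632, nat_lit 65568,
  nat_lit 67584, nat_lit 537067520, nat_lit 8454144, nat_lit 4194336, nat_lit 4196352,
  nat_lit 4325376, nat_lit 549453824]
def M5 : List ℕ := [nat_lit 2, nat_lit 4, nat_lit 256, nat_lit 8, nat_lit 512, nat_lit 32768,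
  nat_lit 16, nat_lit 1024, nat_lit 65536, nat_lit 4194304, nat_lit 32, nat_lit 2048,
  nat_lit 131072, nat_lit 8388608, nat_lit 536870912]
def M6 : List ℕ := [nat_lit 0]

def MM' : List (List ℕ) := [M1, M2, M3, M4, M5, M6]

def MM (a : Fin 6) : List ℕ := MM'.get a

def cntD (u : ℕ) (C : List ℕ) : ℕ :=
  List.rec 0 (fun r _ s => Bool.rec s (Nat.succ s) (Nat.beq (Nat.land u r) 0)) C

def cntP (p : ℕ) (B C : List ℕ) : ℕ :=
  List.rec 0 (fun q _ s => Bool.rec s (Nat.add (cntD (Nat.lor p q) C) s)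
    (Nat.beq (Nat.land p q) 0)) B

def cntT (A B C : List ℕ) : ℕ := List.rec 0 (fun p _ s => Nat.add (cntP p B C) s) A

def tbl : List (List (List ℕ)) := [
  [[0, 0, 0, 0, 0, 0], [0, 0, 0, 0, 0, 0], [0, 0, 0, 0, 0, 0],
   [0, 0, 0, 0, 0, 0], [0, 0, 0, 0, 0, 0], [0, 0, 0, 0, 0, 1]],
  [[0, 0, 0, 0, 0, 0], [0, 0, 0, 0, 0, 0], [0, 0, 120, 540, 360, 60],
   [0, 0, 540, 3240, 2340, 360], [0, 0, 360, 2340, 1680, 240], [0, 0, 60, 360, 240, 31]],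
  [[0, 0, 0, 0, 0, 0], [0, 0, 120, 540, 360, 60], [0, 120, 7680, 21120, 11880, 1560],
   [0, 540, 21120, 47910, 23040, 2610], [0, 360, 11880, 23040, 9660, 975], [0, 60, 1560, 2610, 975, 90]],
  [[0, 0, 0, 0, 0, 0], [0, 0, 540, 3240, 2340, 360], [0, 540, 21120, 47910, 23040, 2610],
   [0, 3240, 47910, 76950, 29430, 2810], [0, 2340, 23040, 29430, 9660, 825], [0, 360, 2610, 2810, 825, 65]],
  [[0, 0, 0, 0, 0, 0], [0, 0, 360, 2340, 1680, 240], [0, 360, 11880, 23040, 9660, 975],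
   [0, 2340, 23040, 29430, 9660, 825], [0, 1680, 9660, 9660, 2730, 210], [0, 240, 975, 825, 210, 15]],
  [[0, 0, 0, 0, 0, 1], [0, 0, 60, 360, 240, 31], [0, 60, 1560, 2610, 975, 90],
   [0, 360, 2610, 2810, 825, 65], [0, 240, 975, 825, 210, 15], [1, 31, 90, 65, 15, 1]]]

def tb (a b c : Fin 6) : ℕ := ((tbl.getD a.1 []).getD b.1 []).getD c.1 0

set_option maxRecDepth 100000 in
theorem tbl_le : ∀ a b c : Fin 6, a ≤ b → b ≤ c → cntT (MM a) (MM b) (MM c) = tb a b c := by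
  decide +kernel

theorem tb_swap : ∀ a b c : Fin 6, tb a b c = tb b a c ∧ tb a b c = tb a c b := by
  decide +kernel

def mask {α : Type*} [DecidableEq α] (f : Fin 6 → α) : ℕ :=
  Nat.ofBits (n := 6 * 6) (fun k => decide (k.divNat < k.modNat ∧ f k.divNat = f k.modNat))

theorem testBit_mask {α : Type*} [DecidableEq α] (f : Fin 6 → α) (k : Fin (6 * 6)) :
    (mask f).testBit k = decide (k.divNat < k.modNat ∧ f k.divNat = f k.modNat) := by
  unfold mask
  rw [Nat.testBit_ofBits_lt _ _ k.2]

theorem mask_disj {α β : Type*} [DecidableEq α] [DecidableEq β] (f : Fin 6 → α) (g : Fin 6 → β) :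
    Nat.land (mask f) (mask g) = 0 ↔ ∀ i j, i < j → ¬(f i = f j ∧ g i = g j) := by
  change mask f &&& mask g = 0 ↔ _
  constructor
  · intro h i j hij hfg
    have h1 := congrArg (fun x => Nat.testBit x (finProdFinEquiv (i, j) : Fin (6 * 6))) h
    have e1 : (finProdFinEquiv (i, j)).divNat = i :=
      congrArg Prod.fst (finProdFinEquiv.symm_apply_apply (i, j))
    have e2 : (finProdFinEquiv (i, j)).modNat = j :=
      congrArg Prod.snd (finProdFinEquiv.symm_apply_apply (i, j))
    simp only [Nat.testBit_and, testBit_mask, e1, e2] at h1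
    simp [hij, hfg.1, hfg.2] at h1
  · intro h
    apply Nat.eq_of_testBit_eq
    intro k
    rw [Nat.testBit_and, Nat.zero_testBit]
    by_cases hk : k < 6 * 6
    · have h1 := testBit_mask f ⟨k, hk⟩
      have h2 := testBit_mask g ⟨k, hk⟩
      simp only at h1 h2
      rw [h1, h2]
      have := h (Fin.divNat (⟨k, hk⟩ : Fin (6 * 6))) (Fin.modNat (⟨k, hk⟩ : Fin (6 * 6)))
      simp only [Bool.and_eq_false_iff, decide_eq_false_iff_not]
      tauto
    · unfold mask
      rw [Nat.testBit_ofBits_ge _ _ (by omega)]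
      simp

def code {α : Type*} [DecidableEq α] (f : Fin 6 → α) (i : Fin 6) : Fin 6 :=
  (univ.filter (fun j => f j = f i)).min' ⟨i, by simp⟩

theorem code_le {α : Type*} [DecidableEq α] (f : Fin 6 → α) (i : Fin 6) : code f i ≤ i :=
  Finset.min'_le _ _ (by simp)

theorem code_spec {α : Type*} [DecidableEq α] (f : Fin 6 → α) (i : Fin 6) :
    f (code f i) = f i := by
  have := Finset.min'_mem (univ.filter (fun j => f j = f i)) ⟨i, by simp⟩
  exact (Finset.mem_filter.1 this).2

theorem code_congr {α β : Type*} [DecidableEq α] [DecidableEq β] (f : Fin 6 → α) (g : Fin 6 → β)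
    (h : ∀ i j, f i = f j ↔ g i = g j) : code f = code g := by
  funext i
  unfold code
  congr 1
  ext j
  simp [h]

theorem code_iff {α : Type*} [DecidableEq α] (f : Fin 6 → α) (i j : Fin 6) :
    code f i = code f j ↔ f i = f j := by
  constructor
  · intro h
    rw [← code_spec f i, ← code_spec f j, h]
  · intro h
    unfold code
    simp only [h]

theorem mask_congr {α β : Type*} [DecidableEq α] [DecidableEq β] (f : Fin 6 → α) (g : Fin 6 → β)
    (h : ∀ i j, f i = f j ↔ g i = g j) : mask f = mask g := by
  unfold mask
  simp only [h]

def IsCan (c : Fin 6 → Fin 6) : Prop := ∀ i, c (c i) = c i ∧ c i ≤ i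

instance : DecidablePred IsCan := fun c => by unfold IsCan; infer_instance

theorem isCan_code {α : Type*} [DecidableEq α] (f : Fin 6 → α) : IsCan (code f) := fun i =>
  ⟨(code_iff f _ _).2 (code_spec f i), code_le f i⟩

theorem code_of_isCan {c : Fin 6 → Fin 6} (h : IsCan c) : code c = c := by
  funext i
  apply le_antisymm
  · exact Finset.min'_le _ _ (by simp [(h i).1])
  · have h1 := code_spec c i
    rw [← h1]
    exact (h _).2

def canonL : List (Fin 6 → Fin 6) :=
  (([0] : List (Fin 6)).flatMap fun a => ([0, 1] : List (Fin 6)).flatMap fun b =>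
    ([0, 1, 2] : List (Fin 6)).flatMap fun c => ([0, 1, 2, 3] : List (Fin 6)).flatMap fun d =>
    ([0, 1, 2, 3, 4] : List (Fin 6)).flatMap fun e =>
    ([0, 1, 2, 3, 4, 5] : List (Fin 6)).map fun x => ![a, b, c, d, e, x]).filter
    (fun c => decide (IsCan c))

theorem mem_canonL (c : Fin 6 → Fin 6) : c ∈ canonL ↔ IsCan c := by
  unfold canonL
  rw [List.mem_filter]
  simp only [decide_eq_true_eq, and_iff_right_iff_imp]
  intro h
  have h0 := (h 0).2
  have h1 := (h 1).2
  have h2 := (h 2).2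
  have h3 := (h 3).2
  have h4 := (h 4).2
  have h5 := (h 5).2
  simp only [List.mem_flatMap, List.mem_map]
  refine ⟨c 0, ?_, c 1, ?_, c 2, ?_, c 3, ?_, c 4, ?_, c 5, ?_, ?_⟩
  · revert h0; generalize c 0 = x; revert x; decide
  · revert h1; generalize c 1 = x; revert x; decide
  · revert h2; generalize c 2 = x; revert x; decide
  · revert h3; generalize c 3 = x; revert x; decide
  · revert h4; generalize c 4 = x; revert x; decide
  · revert h5; generalize c 5 = x; revert x; decide
  · funext i
    fin_cases i <;> rfl

def blk (c : Fin 6 → Fin 6) : ℕ := (univ.image c).card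

set_option maxRecDepth 100000 in
theorem canonL_nodup : canonL.Nodup := by decide +kernel

set_option maxRecDepth 100000 in
theorem canonL_perm : (canonL.map (fun c => (blk c, mask c))).Perm
    ((List.finRange 6).flatMap (fun a => (MM a).map (fun m => (a.1 + 1, m)))) := by
  decide +kernel

theorem code_eq_iff {α : Type*} [DecidableEq α] (f : Fin 6 → α) {c : Fin 6 → Fin 6}
    (hc : IsCan c) : code f = c ↔ ∀ i j, f i = f j ↔ c i = c j := by
  constructor
  · rintro rfl i j
    exact (code_iff f i j).symm
  · intro h
    rw [code_congr f c h, code_of_isCan hc]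

theorem card_fiber (n : ℕ) {c : Fin 6 → Fin 6} (hc : IsCan c) :
    (univ.filter (fun f : Fin 6 → Fin n => code f = c)).card = n.descFactorial (blk c) := by
  have hx : ∀ x : {x // x ∈ univ.image c}, c x.1 = x.1 := by
    rintro ⟨x, hx⟩
    simp only [mem_image, mem_univ, true_and] at hx
    obtain ⟨i, rfl⟩ := hx
    exact (hc i).1
  have e : {f : Fin 6 → Fin n // code f = c} ≃ ({x // x ∈ univ.image c} ↪ Fin n) :=
    { toFun := fun f => ⟨fun x => f.1 x.1, fun x y hxy => by
        have := ((code_eq_iff f.1 hc).1 f.2 _ _).1 hxy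
        rw [hx, hx] at this
        exact Subtype.ext this⟩
      invFun := fun e => ⟨fun i => e ⟨c i, by simp⟩, by
        rw [code_eq_iff _ hc]
        intro i j
        rw [e.injective.eq_iff]
        simp⟩
      left_inv := fun f => by
        apply Subtype.ext
        funext i
        exact ((code_eq_iff f.1 hc).1 f.2 _ _).2 (hc i).1
      right_inv := fun e => by
        ext x
        simp [hx] }
  rw [← Fintype.card_subtype, Fintype.card_congr e, Fintype.card_embedding_eq,
    Fintype.card_coe, Fintype.card_fin]
  rfl

theorem sum_mask (n : ℕ) (G : ℕ → ℤ) :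
    ∑ f : Fin 6 → Fin n, G (mask f) =
      ∑ a : Fin 6, (n.descFactorial (a.1 + 1) : ℤ) * ((MM a).map G).sum := by
  have h1 : ∑ f : Fin 6 → Fin n, G (mask f) =
      ∑ c ∈ canonL.toFinset, (n.descFactorial (blk c) : ℤ) * G (mask c) := by
    rw [← Finset.sum_fiberwise_of_maps_to (s := univ) (t := canonL.toFinset) (g := code)
      (fun f _ => by rw [List.mem_toFinset, mem_canonL]; exact isCan_code f)]
    apply Finset.sum_congr rfl
    intro c hc
    rw [List.mem_toFinset, mem_canonL] at hc
    rw [← card_fiber n hc, ← nsmul_eq_mul, ← Finset.sum_const]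
    apply Finset.sum_congr rfl
    intro f hf
    rw [Finset.mem_filter] at hf
    rw [mask_congr f c ((code_eq_iff f hc).1 hf.2)]
  rw [h1, List.sum_toFinset _ canonL_nodup]
  have h2 := (canonL_perm.map (fun p : ℕ × ℕ => (n.descFactorial p.1 : ℤ) * G p.2)).sum_eq
  rw [List.map_map] at h2
  refine h2.trans ?_
  rw [← List.sum_ofFn, List.ofFn_eq_map]
  generalize List.finRange 6 = l
  induction l with
  | nil => rfl
  | cons a l ih =>
    rw [List.flatMap_cons, List.map_append, List.sum_append, ih, List.map_cons, List.sum_cons,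
      List.map_map, ← List.sum_map_mul_left]
    rfl

theorem cntD_eq (u : ℕ) (C : List ℕ) :
    (cntD u C : ℤ) = (C.map (fun r => if Nat.land u r = 0 then (1 : ℤ) else 0)).sum := by
  induction C with
  | nil => rfl
  | cons r C ih =>
    have : cntD u (r :: C) = bif Nat.beq (Nat.land u r) 0 then Nat.succ (cntD u C) else cntD u C := by
      change (Bool.rec (motive := fun _ => ℕ) (cntD u C) (Nat.succ (cntD u C))
        (Nat.beq (Nat.land u r) 0) : ℕ) = _
      cases Nat.beq (Nat.land u r) 0 <;> rfl
    rw [this, List.map_cons, List.sum_cons, ← ih]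
    generalize Nat.land u r = x
    cases x
    · simp [add_comm, Nat.beq]
    · simp [Nat.beq]

theorem cntP_eq (p : ℕ) (B C : List ℕ) :
    (cntP p B C : ℤ) = (B.map (fun q => (C.map (fun r =>
      if Nat.land p q = 0 ∧ Nat.land p r = 0 ∧ Nat.land q r = 0 then (1 : ℤ) else 0)).sum)).sum := by
  induction B with
  | nil => rfl
  | cons q B ih =>
    have : cntP p (q :: B) C = bif Nat.beq (Nat.land p q) 0 then
        (cntD (Nat.lor p q) C) + (cntP p B C) else cntP p B C := by
      change (Bool.rec (motive := fun _ => ℕ) (cntP p B C)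
        (Nat.add (cntD (Nat.lor p q) C) (cntP p B C)) (Nat.beq (Nat.land p q) 0) : ℕ) = _
      cases Nat.beq (Nat.land p q) 0 <;> rfl
    rw [this, List.map_cons, List.sum_cons, ← ih]
    have key : ∀ r, (Nat.land p r = 0 ∧ Nat.land q r = 0) ↔ Nat.land (Nat.lor p q) r = 0 := by
      intro r
      change p &&& r = 0 ∧ q &&& r = 0 ↔ (p ||| q) &&& r = 0
      rw [Nat.and_or_distrib_right, Nat.or_eq_zero_iff]
    simp only [key]
    generalize Nat.land p q = x
    cases x
    · simp only [Nat.beq, cond_true, true_and, Nat.cast_add, cntD_eq]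
    · simp [Nat.beq]

theorem cntT_eq (A B C : List ℕ) :
    (cntT A B C : ℤ) = (A.map (fun p => (B.map (fun q => (C.map (fun r =>
      if Nat.land p q = 0 ∧ Nat.land p r = 0 ∧ Nat.land q r = 0 then (1 : ℤ) else 0)).sum)).sum)).sum := by
  induction A with
  | nil => rfl
  | cons p A ih =>
    have : cntT (p :: A) B C = cntP p B C + cntT A B C := rfl
    rw [this, List.map_cons, List.sum_cons, ← ih, Nat.cast_add, cntP_eq]

theorem list_sum_swap (A B : List ℕ) (F : ℕ → ℕ → ℤ) :
    (A.map (fun p => (B.map (fun q => F p q)).sum)).sum =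
      (B.map (fun q => (A.map (fun p => F p q)).sum)).sum := by
  induction A with
  | nil => simp
  | cons p A ih => simp only [List.map_cons, List.sum_cons, ih, List.sum_map_add]

theorem cntT_swap1 (A B C : List ℕ) : cntT A B C = cntT B A C := by
  have h : (cntT A B C : ℤ) = cntT B A C := by
    rw [cntT_eq, cntT_eq, list_sum_swap]
    have comm : ∀ x y : ℕ, Nat.land x y = Nat.land y x := Nat.land_comm
    have key : ∀ p q r : ℕ, (Nat.land p q = 0 ∧ Nat.land p r = 0 ∧ Nat.land q r = 0) ↔
        (Nat.land q p = 0 ∧ Nat.land q r = 0 ∧ Nat.land p r = 0) := by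
      intro p q r
      rw [comm q p]
      tauto
    simp only [key]
  exact_mod_cast h

theorem cntT_swap2 (A B C : List ℕ) : cntT A B C = cntT A C B := by
  have h : (cntT A B C : ℤ) = cntT A C B := by
    rw [cntT_eq, cntT_eq]
    simp only [list_sum_swap B C]
    have comm : ∀ x y : ℕ, Nat.land x y = Nat.land y x := Nat.land_comm
    have key : ∀ p q r : ℕ, (Nat.land p q = 0 ∧ Nat.land p r = 0 ∧ Nat.land q r = 0) ↔
        (Nat.land p r = 0 ∧ Nat.land p q = 0 ∧ Nat.land r q = 0) := by
      intro p q r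
      rw [comm r q]
      tauto
    simp only [key]
  exact_mod_cast h

theorem tbl_apply (a b c : Fin 6) : cntT (MM a) (MM b) (MM c) = tb a b c := by
  rcases le_total a b with h1 | h1 <;> rcases le_total b c with h2 | h2 <;>
    rcases le_total a c with h3 | h3
  · exact tbl_le a b c h1 h2
  · exact tbl_le a b c h1 h2
  · rw [cntT_swap2, (tb_swap a b c).2]
    exact tbl_le a c b h3 h2
  · rw [cntT_swap2, cntT_swap1, (tb_swap a b c).2, (tb_swap a c b).1]
    exact tbl_le c a b h3 h1
  · rw [cntT_swap1, (tb_swap a b c).1]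
    exact tbl_le b a c h1 h3
  · rw [cntT_swap1, cntT_swap2, (tb_swap a b c).1, (tb_swap b a c).2]
    exact tbl_le b c a h2 h3
  · rw [cntT_swap1, (tb_swap a b c).1]
    exact tbl_le b a c h1 h3
  · rw [cntT_swap1, cntT_swap2, cntT_swap1, (tb_swap a b c).1, (tb_swap b a c).2,
      (tb_swap b c a).1]
    exact tbl_le c b a h2 h1

theorem list_sum_comm (A : List ℕ) (d : Fin 6 → ℤ) (F : ℕ → Fin 6 → ℤ) :
    (A.map (fun p => ∑ b, d b * F p b)).sum = ∑ b, d b * (A.map (fun p => F p b)).sum := by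
  induction A with
  | nil => simp
  | cons p A ih => simp only [List.map_cons, List.sum_cons, ih, mul_add, Finset.sum_add_distrib]

theorem triple_sum (n : ℕ) :
    ∑ f : Fin 6 → Fin n, ∑ g : Fin 6 → Fin n, ∑ h : Fin 6 → Fin n,
      (if Nat.land (mask f) (mask g) = 0 ∧ Nat.land (mask f) (mask h) = 0 ∧
        Nat.land (mask g) (mask h) = 0 then (1 : ℤ) else 0) =
      ∑ a : Fin 6, (n.descFactorial (a.1 + 1) : ℤ) * ∑ b : Fin 6, (n.descFactorial (b.1 + 1) : ℤ) *
        ∑ c : Fin 6, (n.descFactorial (c.1 + 1) : ℤ) * (cntT (MM a) (MM b) (MM c) : ℤ) := by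
  have h3 : ∀ p q : ℕ, ∑ h : Fin 6 → Fin n, (if Nat.land p q = 0 ∧ Nat.land p (mask h) = 0 ∧
        Nat.land q (mask h) = 0 then (1 : ℤ) else 0) = _ := fun p q =>
    sum_mask n (fun r => if Nat.land p q = 0 ∧ Nat.land p r = 0 ∧ Nat.land q r = 0 then 1 else 0)
  simp only [h3]
  have h2 : ∀ p : ℕ, _ = _ := fun p => sum_mask n (fun q => ∑ c : Fin 6,
    (n.descFactorial (c.1 + 1) : ℤ) * ((MM c).map (fun r =>
      if Nat.land p q = 0 ∧ Nat.land p r = 0 ∧ Nat.land q r = 0 then (1 : ℤ) else 0)).sum)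
  simp only [h2]
  have h1 := sum_mask n (fun p => ∑ b : Fin 6, (n.descFactorial (b.1 + 1) : ℤ) *
    ((MM b).map (fun q => ∑ c : Fin 6, (n.descFactorial (c.1 + 1) : ℤ) * ((MM c).map (fun r =>
      if Nat.land p q = 0 ∧ Nat.land p r = 0 ∧ Nat.land q r = 0 then (1 : ℤ) else 0)).sum)).sum)
  refine h1.trans ?_
  simp only [list_sum_comm, cntT_eq]

theorem count_tuples (n : ℕ) :
    (720 : ℤ) * numPLR n n n 6 =
    ∑ f : Fin 6 → Fin n, ∑ g : Fin 6 → Fin n, ∑ h : Fin 6 → Fin n,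
      (if Nat.land (mask f) (mask g) = 0 ∧ Nat.land (mask f) (mask h) = 0 ∧
        Nat.land (mask g) (mask h) = 0 then (1 : ℤ) else 0) := by
  classical
  let X := Fin n × Fin n × Fin n
  let R : X → X → Prop := fun e e' => ¬(e.1 = e'.1 ∧ e.2.1 = e'.2.1) ∧
    ¬(e.1 = e'.1 ∧ e.2.2 = e'.2.2) ∧ ¬(e.2.1 = e'.2.1 ∧ e.2.2 = e'.2.2)
  have Rsymm : ∀ x y, R x y → R y x := by
    intro x y h
    simpa only [R, eq_comm] using h
  have Rirr : ∀ x, ¬ R x x := by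
    intro x h
    simp [R] at h
  let T : Finset (Fin 6 → X) := univ.filter (fun t => ∀ i j, i < j → R (t i) (t j))
  have hT : ∀ t ∈ T, ∀ i j, i ≠ j → R (t i) (t j) := by
    intro t ht i j hij
    rw [Finset.mem_filter] at ht
    rcases lt_or_gt_of_ne hij with h | h
    · exact ht.2 i j h
    · exact Rsymm _ _ (ht.2 j i h)
  have hinj : ∀ t ∈ T, Function.Injective t := by
    intro t ht i j hij
    by_contra h
    have := hT t ht i j h
    rw [hij] at this
    exact Rirr _ this
  let S : Finset (Finset X) := univ.filter (fun E => IsPLR E ∧ E.card = 6)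
  have hS : numPLR n n n 6 = S.card := by
    unfold numPLR
    rw [Nat.card_eq_fintype_card, Fintype.card_subtype]
  have hmap : ∀ t ∈ T, univ.image t ∈ S := by
    intro t ht
    rw [Finset.mem_filter]
    refine ⟨mem_univ _, ?_, ?_⟩
    · intro e he e' he' hne
      simp only [mem_image, mem_univ, true_and] at he he'
      obtain ⟨i, rfl⟩ := he
      obtain ⟨j, rfl⟩ := he'
      exact hT t ht i j (fun h => hne (by rw [h]))
    · rw [Finset.card_image_of_injective _ (hinj t ht)]
      simp
  have hfib : ∀ E ∈ S, (T.filter (fun t => univ.image t = E)).card = 720 := by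
    intro E hE
    rw [Finset.mem_filter] at hE
    obtain ⟨-, hE, hc⟩ := hE
    have h720 : (univ : Finset (Fin 6 ↪ {x // x ∈ E})).card = 720 := by
      rw [Finset.card_univ, Fintype.card_embedding_eq]
      simp [hc, Nat.descFactorial]
    rw [← h720]
    symm
    apply Finset.card_bij (fun (e : Fin 6 ↪ {x // x ∈ E}) _ => fun i => (e i).1)
    · intro e _
      rw [Finset.mem_filter, Finset.mem_filter]
      refine ⟨⟨mem_univ _, ?_⟩, ?_⟩
      · intro i j hij
        apply hE _ (e i).2 _ (e j).2
        intro h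
        exact hij.ne (e.injective (Subtype.ext h))
      · apply Finset.eq_of_subset_of_card_le
        · intro x hx
          simp only [mem_image, mem_univ, true_and] at hx
          obtain ⟨i, rfl⟩ := hx
          exact (e i).2
        · rw [Finset.card_image_of_injective]
          · simp [hc]
          · intro i j hij
            exact e.injective (Subtype.ext hij)
    · intro e _ e' _ h
      ext1 i
      exact Subtype.ext (congrFun h i)
    · intro t ht
      rw [Finset.mem_filter] at ht
      refine ⟨⟨fun i => ⟨t i, ?_⟩, ?_⟩, mem_univ _, rfl⟩
      · rw [← ht.2]
        simp
      · intro i j hij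
        exact hinj t ht.1 (congrArg Subtype.val hij)
  have hcard : T.card = S.card * 720 := by
    rw [Finset.card_eq_sum_card_fiberwise (f := fun t => univ.image t) (t := S) hmap,
      Finset.sum_congr rfl hfib, Finset.sum_const, smul_eq_mul]
  rw [hS, mul_comm]
  have hcard' : ((S.card : ℤ) * 720) = (T.card : ℤ) := by
    rw [hcard]; push_cast; rfl
  rw [hcard', ← Fintype.sum_prod_type', ]
  rw [Finset.card_filter]
  push_cast
  simp only [← Fintype.sum_prod_type']
  symm
  let e : ((Fin 6 → Fin n) × (Fin 6 → Fin n)) × (Fin 6 → Fin n) ≃ (Fin 6 → X) :=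
    { toFun := fun p i => (p.1.1 i, p.1.2 i, p.2 i)
      invFun := fun t => ((fun i => (t i).1, fun i => (t i).2.1), fun i => (t i).2.2)
      left_inv := fun _ => rfl
      right_inv := fun _ => rfl }
  apply Fintype.sum_equiv e
  intro p
  congr 1
  simp only [mask_disj, eq_iff_iff]
  constructor
  · rintro ⟨h1, h2, h3⟩ i j hij
    exact ⟨h1 i j hij, h2 i j hij, h3 i j hij⟩
  · intro h
    exact ⟨fun i j hij => (h i j hij).1, fun i j hij => (h i j hij).2.1,
      fun i j hij => (h i j hij).2.2⟩

theorem desc_cast (n k : ℕ) :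
    (n.descFactorial (k + 1) : ℤ) = ((n : ℤ) - k) * (n.descFactorial k : ℤ) := by
  rw [Nat.descFactorial_succ]
  by_cases h : k ≤ n
  · push_cast [Nat.cast_sub h]; ring
  · rw [Nat.descFactorial_of_lt (by omega : n < k)]
    simp

def D (x : ℤ) : Fin 6 → ℤ :=
  ![x, (x - 1) * x, (x - 2) * ((x - 1) * x), (x - 3) * ((x - 2) * ((x - 1) * x)),
    (x - 4) * ((x - 3) * ((x - 2) * ((x - 1) * x))),
    (x - 5) * ((x - 4) * ((x - 3) * ((x - 2) * ((x - 1) * x))))]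

theorem desc_D (n : ℕ) (a : Fin 6) : (n.descFactorial (a.1 + 1) : ℤ) = D n a := by
  fin_cases a <;> simp only [desc_cast] <;> simp [D]

theorem stmt13(n : ℕ) (hn : 0 < n) :
    (720 : ℤ) * numPLR n n n 6 = (n : ℤ) ^ 3 * ((n : ℤ) - 1) ^ 2 * ((n : ℤ) - 2) ^ 2 * ((n : ℤ) ^ 11 + 6 * (n : ℤ) ^ 10 - 22 * (n : ℤ) ^ 9 - 168 * (n : ℤ) ^ 8 + 231 * (n : ℤ) ^ 7 + 2022 * (n : ℤ) ^ 6 - 2014 * (n : ℤ) ^ 5 - 12606 * (n : ℤ) ^ 4 + 16168 * (n : ℤ) ^ 3 + 32250 * (n : ℤ) ^ 2 - 70740 * (n : ℤ) + 36600) := by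
  rw [count_tuples, triple_sum]
  simp only [tbl_apply, desc_D]
  generalize (n : ℤ) = x
  simp [Fin.sum_univ_six, D, tb, tbl]
  ring
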